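/- Let Ω ⊆ ℝ^N be an open set and let f : ℝ^N → ℝ be continuously differentiable on Ω, with f and all its partial derivatives ∂f/∂x_d integrable on Ω. Then the total variation of f on Ω, defined as V(f; Ω) := sup { ∫_Ω f(x) · div φ(x) dx : φ ∈ C_c^∞(Ω, ℝ^N), ‖φ(x)‖_∞ ≤ 1 for all x ∈ Ω }, satisfies V(f; Ω) = Σ_{d=1}^N ∫_Ω |∂f/∂x_d (x)| dx. -/

import Mathlib

/-!
For a test field `φ`, integration by parts (`integral_mul_fderiv_test`) gives
`∫_Ω f div φ = -∑_d ∫_Ω ∂_d f φ_d`, which is at most `∑_d ∫_Ω |∂_d f|` because `|φ_d| ≤ 1`.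

The supremum is not smaller: the constraint `‖φ‖_∞ ≤ 1` decouples the coordinates, so each `-φ_d`
may be chosen separately to make `∫_Ω ∂_d f (-φ_d)` close to `∫_Ω |∂_d f|`. Since `∂_d f` is
continuous on `Ω`, the sets where it is positive and negative are open, and the difference of a
smooth cutoff of each is a suitable `-φ_d` (`exists_test_integral_gt`).
-/

open MeasureTheory

open Set Filter Topology

theorem exists_smooth_cutoff {N : ℕ} {K U : Set (EuclideanSpace ℝ (Fin N))}
    (hK : IsCompact K) (hU : IsOpen U) (hKU : K ⊆ U) :
    ∃ ψ : EuclideanSpace ℝ (Fin N) → ℝ, ContDiff ℝ (⊤ : ℕ∞) ψ ∧ HasCompactSupport ψ ∧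
      tsupport ψ ⊆ U ∧ (∀ x, 0 ≤ ψ x) ∧ (∀ x, ψ x ≤ 1) ∧ ∀ x ∈ K, ψ x = 1 := by
  obtain ⟨L, hL, hKL, hLU⟩ := exists_compact_between hK hU hKU
  obtain ⟨ψ, h1, h2, h3, h4⟩ := exists_contMDiff_support_eq_eq_one_iff
    (modelWithCornersSelf ℝ (EuclideanSpace ℝ (Fin N))) (n := ⊤) isOpen_interior hK.isClosed hKL
  have hts : tsupport ψ ⊆ L :=
    closure_minimal (h3.subset.trans interior_subset) hL.isClosed
  refine ⟨ψ, h1.contDiff, hL.of_isClosed_subset (isClosed_tsupport _) hts, hts.trans hLU,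
    fun x => (h2 ⟨x, rfl⟩).1, fun x => (h2 ⟨x, rfl⟩).2, fun x hx => (h4 x).1 hx⟩

/-- On an open set where `g ≥ 0`, smooth cutoffs recover the integral of `g`, by exhausting the
set with compact sets. -/
theorem exists_cutoff_integral_gt {N : ℕ} {Ω U : Set (EuclideanSpace ℝ (Fin N))}
    (hU : IsOpen U) (hUΩ : U ⊆ Ω) {g : EuclideanSpace ℝ (Fin N) → ℝ}
    (hg : IntegrableOn g Ω) (hpos : ∀ x ∈ U, 0 ≤ g x) {ε : ℝ} (hε : 0 < ε) :
    ∃ ψ : EuclideanSpace ℝ (Fin N) → ℝ, ContDiff ℝ (⊤ : ℕ∞) ψ ∧ HasCompactSupport ψ ∧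
      tsupport ψ ⊆ U ∧ (∀ x, 0 ≤ ψ x) ∧ (∀ x, ψ x ≤ 1) ∧
      (∫ x in U, g x) - ε < ∫ x in Ω, g x * ψ x := by
  have : LocallyCompactSpace U := hU.locallyCompactSpace
  let K : ℕ → Set (EuclideanSpace ℝ (Fin N)) := fun n => Subtype.val '' compactCovering U n
  have hKc : ∀ n, IsCompact (K n) := fun n =>
    (isCompact_compactCovering U n).image continuous_subtype_val
  have hKU : ∀ n, K n ⊆ U := fun n => by rintro _ ⟨y, -, rfl⟩; exact y.2
  have hun : ⋃ n, K n = U := by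
    simp only [K]
    rw [← image_iUnion, iUnion_compactCovering, image_univ, Subtype.range_coe]
  have hmono : Monotone K := fun m n h => image_mono (compactCovering_subset U h)
  have hlim : Tendsto (fun n => ∫ x in K n, g x) atTop (𝓝 (∫ x in U, g x)) := by
    have := tendsto_setIntegral_of_monotone (μ := volume) (f := g)
      (fun n => (hKc n).measurableSet) hmono (by rw [hun]; exact hg.mono_set hUΩ)
    rwa [hun] at this
  obtain ⟨n, hn⟩ := (hlim.eventually_const_lt (sub_lt_self _ hε)).exists
  obtain ⟨ψ, h1, h2, h3, h4, h5, h6⟩ := exists_smooth_cutoff (hKc n) hU (hKU n)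
  refine ⟨ψ, h1, h2, h3, h4, h5, hn.trans_le ?_⟩
  have hint : IntegrableOn (fun x => g x * ψ x) Ω :=
    Integrable.mul_bdd (c := 1) hg h1.continuous.aestronglyMeasurable
      (Eventually.of_forall fun x => by rw [Real.norm_eq_abs, abs_of_nonneg (h4 x)]; exact h5 x)
  have hnn : ∀ x, 0 ≤ g x * ψ x := by
    intro x
    by_cases hx : x ∈ U
    · exact mul_nonneg (hpos x hx) (h4 x)
    · rw [image_eq_zero_of_notMem_tsupport (fun h => hx (h3 h)), mul_zero]
  calc ∫ x in K n, g x = ∫ x in K n, g x * ψ x :=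
        setIntegral_congr_fun (hKc n).measurableSet fun x hx => by simp [h6 x hx]
    _ ≤ ∫ x in Ω, g x * ψ x :=
        setIntegral_mono_set hint (Eventually.of_forall hnn)
          ((hKU n).trans hUΩ).eventuallyLE

/-- `L¹`–`L^∞` duality with smooth test functions: for `g` continuous on `Ω`, smooth cutoffs of
`{g > 0}` and `{g < 0}` combine to an approximation of the sign of `g`. -/
theorem exists_test_integral_gt {N : ℕ} {Ω : Set (EuclideanSpace ℝ (Fin N))}
    (hΩ : IsOpen Ω) {g : EuclideanSpace ℝ (Fin N) → ℝ}
    (hg : IntegrableOn g Ω) (hc : ContinuousOn g Ω) {ε : ℝ} (hε : 0 < ε) :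
    ∃ ψ : EuclideanSpace ℝ (Fin N) → ℝ, ContDiff ℝ (⊤ : ℕ∞) ψ ∧ HasCompactSupport ψ ∧
      tsupport ψ ⊆ Ω ∧ (∀ x, |ψ x| ≤ 1) ∧
      (∫ x in Ω, |g x|) - ε < ∫ x in Ω, g x * ψ x := by
  have hP : IsOpen (Ω ∩ g ⁻¹' Ioi 0) := hc.isOpen_inter_preimage hΩ isOpen_Ioi
  have hQ : IsOpen (Ω ∩ g ⁻¹' Iio 0) := hc.isOpen_inter_preimage hΩ isOpen_Iio
  obtain ⟨p, p1, p2, p3, p4, p5, p6⟩ := exists_cutoff_integral_gt hP inter_subset_left hg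
    (fun x hx => le_of_lt hx.2) (half_pos hε)
  obtain ⟨q, q1, q2, q3, q4, q5, q6⟩ := exists_cutoff_integral_gt (g := fun x => - g x)
    hQ inter_subset_left hg.neg (fun x hx => (neg_pos.2 hx.2).le) (half_pos hε)
  have hint : ∀ r : EuclideanSpace ℝ (Fin N) → ℝ, Continuous r → (∀ x, 0 ≤ r x) →
      (∀ x, r x ≤ 1) → IntegrableOn (fun x => g x * r x) Ω := fun r h1 h4 h5 =>
    Integrable.mul_bdd (c := 1) hg h1.aestronglyMeasurable
      (Eventually.of_forall fun x => by rw [Real.norm_eq_abs, abs_of_nonneg (h4 x)]; exact h5 x)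
  refine ⟨fun x => p x - q x, p1.sub q1, p2.sub q2, ?_, ?_, ?_⟩
  · exact (tsupport_sub p q).trans
      (union_subset (p3.trans inter_subset_left) (q3.trans inter_subset_left))
  · intro x
    rw [abs_le]
    constructor <;> linarith [p4 x, p5 x, q4 x, q5 x]
  · have hq : Integrable (fun x => -g x * q x) (volume.restrict Ω) := by
      simp_rw [neg_mul]
      exact (hint q q1.continuous q4 q5).neg
    have hgn : IntegrableOn (fun x => -g x) Ω := hg.neg
    have e1 : ∫ x in Ω, g x * (p x - q x) =
        (∫ x in Ω, g x * p x) + ∫ x in Ω, -g x * q x := by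
      rw [← integral_add (hint p p1.continuous p4 p5)
        hq]
      congr 1; ext x; ring
    have e2 : ∫ x in Ω, |g x| =
        (∫ x in Ω ∩ g ⁻¹' Ioi 0, g x) + ∫ x in Ω ∩ g ⁻¹' Iio 0, -g x := by
      rw [← integral_indicator hΩ.measurableSet, ← integral_indicator hP.measurableSet,
        ← integral_indicator hQ.measurableSet, ← integral_add
          ((hg.mono_set inter_subset_left).integrable_indicator hP.measurableSet)
          ((hgn.mono_set inter_subset_left).integrable_indicator hQ.measurableSet)]
      congr 1; ext x
      by_cases hx : x ∈ Ω
      · rcases lt_trichotomy (g x) 0 with h | h | h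
        · simp [indicator, hx, h, h.not_gt, abs_of_neg h]
        · simp [indicator, h]
        · simp [indicator, hx, h, h.not_gt, abs_of_pos h]
      · simp [indicator, hx]
    linarith

/-- A test function supported in `Ω` allows integration by parts against a function that is
merely differentiable on `Ω`: their product vanishes near every point outside `Ω`. -/
theorem integral_mul_fderiv_test {N : ℕ} {Ω : Set (EuclideanSpace ℝ (Fin N))}
    (hΩ : IsOpen Ω) {f : EuclideanSpace ℝ (Fin N) → ℝ} (hf : DifferentiableOn ℝ f Ω)
    (hfi : IntegrableOn f Ω) {v : EuclideanSpace ℝ (Fin N)}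
    (hfi' : IntegrableOn (fun x => fderiv ℝ f x v) Ω)
    {ψ : EuclideanSpace ℝ (Fin N) → ℝ} (hψ : ContDiff ℝ (⊤ : ℕ∞) ψ)
    (hc : HasCompactSupport ψ) (hs : tsupport ψ ⊆ Ω) :
    IntegrableOn (fun x => f x * fderiv ℝ ψ x v) Ω ∧
    IntegrableOn (fun x => fderiv ℝ f x v * ψ x) Ω ∧
    ∫ x in Ω, f x * fderiv ℝ ψ x v = - ∫ x in Ω, fderiv ℝ f x v * ψ x := by
  have hd : Differentiable ℝ ψ := hψ.differentiable (by simp)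
  have hc' : HasCompactSupport (fun x => fderiv ℝ ψ x v) := hc.fderiv_apply ℝ v
  have hcont' : Continuous (fun x => fderiv ℝ ψ x v) :=
    (hψ.continuous_fderiv (by simp)).clm_apply continuous_const
  have hmul : ∀ {u r : EuclideanSpace ℝ (Fin N) → ℝ}, IntegrableOn u Ω → Continuous r →
      HasCompactSupport r → IntegrableOn (fun x => u x * r x) Ω := by
    intro u r hu hr hrc
    obtain ⟨C, hC⟩ := hrc.exists_bound_of_continuous hr
    exact Integrable.mul_bdd (c := C) hu hr.aestronglyMeasurable (Eventually.of_forall hC)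
  have i1 : IntegrableOn (fun x => f x * fderiv ℝ ψ x v) Ω := hmul hfi hcont' hc'
  have i2 : IntegrableOn (fun x => fderiv ℝ f x v * ψ x) Ω := hmul hfi' hψ.continuous hc
  have i3 : IntegrableOn (fun x => f x * ψ x) Ω := hmul hfi hψ.continuous hc
  have z0 : ∀ x ∉ Ω, ψ x = 0 := fun x hx =>
    image_eq_zero_of_notMem_tsupport fun h => hx (hs h)
  have z1 : ∀ x ∉ tsupport ψ, fderiv ℝ ψ x = 0 := fun x hx =>
    image_eq_zero_of_notMem_tsupport fun h => hx (tsupport_fderiv_subset ℝ h)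
  have hder : ∀ x, HasFDerivAt (fun y => f y * ψ y)
      (f x • fderiv ℝ ψ x + ψ x • fderiv ℝ f x) x := by
    intro x
    by_cases hx : x ∈ tsupport ψ
    · exact ((hf.differentiableAt (hΩ.mem_nhds (hs hx))).hasFDerivAt).mul (hd x).hasFDerivAt
    · rw [z1 x hx, image_eq_zero_of_notMem_tsupport hx, smul_zero, zero_smul, add_zero]
      refine (hasFDerivAt_const (0 : ℝ) x).congr_of_eventuallyEq ?_
      filter_upwards [(isClosed_tsupport ψ).isOpen_compl.mem_nhds hx] with y hy
      rw [image_eq_zero_of_notMem_tsupport hy, mul_zero]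
  have hder' : ∀ x, fderiv ℝ (fun y => f y * ψ y) x v =
      f x * fderiv ℝ ψ x v + fderiv ℝ f x v * ψ x := by
    intro x
    rw [(hder x).fderiv]
    simp [mul_comm]
  have hsum : IntegrableOn (fun x => f x * fderiv ℝ ψ x v + fderiv ℝ f x v * ψ x) Ω := i1.add i2
  have s1 : Function.support (fun x => f x * fderiv ℝ ψ x v + fderiv ℝ f x v * ψ x) ⊆ Ω := by
    intro x hx
    by_contra h
    exact hx (by simp [z0 x h, z1 x fun h' => h (hs h')])
  have s2 : Function.support (fun x => f x * ψ x) ⊆ Ω := by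
    intro x hx
    by_contra h
    exact hx (by simp [z0 x h])
  -- Integration by parts of `f * ψ` against the constant `1` says `∫ ∂ᵥ(f * ψ) = 0`.
  have key := integral_mul_fderiv_eq_neg_fderiv_mul_of_integrable (μ := volume) (𝕜 := ℝ)
    (f := fun _ : EuclideanSpace ℝ (Fin N) => (1 : ℝ)) (g := fun y => f y * ψ y) (v := v)
    (by simp)
    (by simpa [hder'] using (integrableOn_iff_integrable_of_support_subset s1).1 hsum)
    (by simpa using (integrableOn_iff_integrable_of_support_subset s2).1 i3)
    (by fun_prop) (fun x _ => (hder x).differentiableAt)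
  simp only [hder', one_mul] at key
  rw [← setIntegral_eq_integral_of_forall_compl_eq_zero
    (s := Ω) (fun x hx => by_contra fun h => hx (s1 h)), integral_add i1 i2] at key
  simp at key
  exact ⟨i1, i2, by linarith⟩

/-- For an open set `Ω ⊆ ℝ^N` and `f` continuously differentiable on `Ω` with `f` and all
its partial derivatives integrable on `Ω`, the total variation
`V(f; Ω) = sup { ∫_Ω f · div φ : φ ∈ C_c^∞(Ω, ℝ^N), ‖φ‖_∞ ≤ 1 }`
equals `∑_{d} ∫_Ω |∂f/∂x_d|`. -/
theorem total_variation_of_differentiable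
    (N : ℕ) (Ω : Set (EuclideanSpace ℝ (Fin N))) (hΩ : IsOpen Ω)
    (f : EuclideanSpace ℝ (Fin N) → ℝ)
    (hf : ContDiffOn ℝ 1 f Ω)
    (hfi : IntegrableOn f Ω)
    (hfi' : ∀ d : Fin N,
      IntegrableOn (fun x => fderiv ℝ f x (EuclideanSpace.single d 1)) Ω) :
    sSup {r : ℝ |
        ∃ φ : EuclideanSpace ℝ (Fin N) → EuclideanSpace ℝ (Fin N),
          ContDiff ℝ (⊤ : ℕ∞) φ ∧ HasCompactSupport φ ∧ tsupport φ ⊆ Ω ∧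
          (∀ x, ∀ d : Fin N, |φ x d| ≤ 1) ∧
          r = ∫ x in Ω,
                f x * ∑ d : Fin N, fderiv ℝ (fun y => φ y d) x (EuclideanSpace.single d 1)} =
      ∑ d : Fin N, ∫ x in Ω, |fderiv ℝ f x (EuclideanSpace.single d 1)| := by
  have hdiff : DifferentiableOn ℝ f Ω := hf.differentiableOn (by simp)
  have hparts : ∀ φ : EuclideanSpace ℝ (Fin N) → EuclideanSpace ℝ (Fin N),
      ContDiff ℝ (⊤ : ℕ∞) φ → HasCompactSupport φ → tsupport φ ⊆ Ω →
      (∀ d, IntegrableOn (fun x => fderiv ℝ f x (EuclideanSpace.single d 1) * φ x d) Ω) ∧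
      ∫ x in Ω, f x * ∑ d : Fin N, fderiv ℝ (fun y => φ y d) x (EuclideanSpace.single d 1) =
        ∑ d, - ∫ x in Ω, fderiv ℝ f x (EuclideanSpace.single d 1) * φ x d := by
    intro φ h1 h2 h3
    have hts : ∀ d : Fin N, tsupport (fun y => φ y d) ⊆ tsupport φ := fun d =>
      closure_mono fun x hx h => hx (by simp [h])
    have H := fun d : Fin N => integral_mul_fderiv_test hΩ hdiff hfi (hfi' d)
      (ψ := fun y => φ y d) (contDiff_euclidean.1 h1 d)
      (h2.of_isClosed_subset (isClosed_tsupport _) (hts d)) ((hts d).trans h3)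
    refine ⟨fun d => (H d).2.1, ?_⟩
    simp_rw [Finset.mul_sum]
    rw [integral_finsetSum _ fun d _ => (H d).1]
    exact Finset.sum_congr rfl fun d _ => (H d).2.2
  refine csSup_eq_of_forall_le_of_forall_lt_exists_gt ?_ ?_ ?_
  · exact ⟨_, 0, contDiff_const, HasCompactSupport.zero, by simp [tsupport], by simp, rfl⟩
  · rintro r ⟨φ, h1, h2, h3, h4, rfl⟩
    obtain ⟨hi, he⟩ := hparts φ h1 h2 h3
    rw [he]
    refine Finset.sum_le_sum fun d _ => ?_
    rw [← integral_neg]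
    refine integral_mono (hi d).neg (hfi' d).abs fun x => ?_
    calc -(fderiv ℝ f x (EuclideanSpace.single d 1) * φ x d)
        ≤ |fderiv ℝ f x (EuclideanSpace.single d 1) * φ x d| := neg_le_abs _
      _ = |fderiv ℝ f x (EuclideanSpace.single d 1)| * |φ x d| := abs_mul _ _
      _ ≤ |fderiv ℝ f x (EuclideanSpace.single d 1)| :=
        mul_le_of_le_one_right (abs_nonneg _) (h4 x d)
  · intro w hw
    -- The `+ 1` keeps the allowance positive when `N = 0`.
    set ε := ((∑ d : Fin N, ∫ x in Ω, |fderiv ℝ f x (EuclideanSpace.single d 1)|) - w) / (N + 1)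
      with hεdef
    have hN : (0 : ℝ) < N + 1 := by positivity
    have hε : 0 < ε := div_pos (sub_pos.2 hw) hN
    have hcont : ∀ d : Fin N,
        ContinuousOn (fun x => fderiv ℝ f x (EuclideanSpace.single d 1)) Ω := fun d =>
      (hf.continuousOn_fderiv_of_isOpen hΩ le_rfl).clm_apply continuousOn_const
    choose ψ p1 p2 p3 p4 p5 using fun d : Fin N =>
      exists_test_integral_gt hΩ (hfi' d) (hcont d) hε
    let φ : EuclideanSpace ℝ (Fin N) → EuclideanSpace ℝ (Fin N) :=
      fun x => WithLp.toLp 2 fun d => -ψ d x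
    have hK : IsCompact (⋃ d, tsupport (ψ d)) := isCompact_iUnion fun d => p2 d
    have hts : tsupport φ ⊆ ⋃ d, tsupport (ψ d) := by
      refine closure_minimal (fun x hx => ?_) hK.isClosed
      by_contra h
      rw [mem_iUnion, not_exists] at h
      refine hx ?_
      ext d
      simp [φ, image_eq_zero_of_notMem_tsupport (h d)]
    have h1 : ContDiff ℝ (⊤ : ℕ∞) φ := contDiff_euclidean.2 fun d => (p1 d).neg
    have h2 : HasCompactSupport φ := hK.of_isClosed_subset (isClosed_tsupport _) hts
    have h3 : tsupport φ ⊆ Ω := hts.trans (iUnion_subset p3)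
    refine ⟨_, ⟨φ, h1, h2, h3, fun x d => by simpa [φ] using p4 d x, rfl⟩, ?_⟩
    rw [(hparts φ h1 h2 h3).2]
    have hle : ∑ d : Fin N, ((∫ x in Ω, |fderiv ℝ f x (EuclideanSpace.single d 1)|) - ε) ≤
        ∑ d, - ∫ x in Ω, fderiv ℝ f x (EuclideanSpace.single d 1) * φ x d :=
      Finset.sum_le_sum fun d _ => by
        simpa [φ, integral_neg] using (p5 d).le
    refine lt_of_lt_of_le ?_ hle
    rw [Finset.sum_sub_distrib, Finset.sum_const, Finset.card_univ, Fintype.card_fin, nsmul_eq_mul]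
    have : ε * (N + 1) =
      (∑ d : Fin N, ∫ x in Ω, |fderiv ℝ f x (EuclideanSpace.single d 1)|) - w :=
      div_mul_cancel₀ _ hN.ne'
    linarith
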